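/- Let A = diag(a₁,…,aₙ) and let X(t), P(t), Y(t), Q(t) be differentiable curves of n×r real matrices satisfying for all t the constraints XᵀX = YᵀY = I_r, XᵀP + PᵀX = 0, YᵀQ + QᵀY = 0, and the r-coupled Neumann equations with the normal metric (κ = 0): Ẋ = P − XPᵀX, Ṗ = −AY + PXᵀP + XΛ, Ẏ = Q − YQᵀY, Q̇ = −AX + QYᵀQ + YΠ, where Λ = (1/2)(XᵀAY + YᵀAX) − PᵀP and Π = (1/2)(XᵀAY + YᵀAX) − QᵀQ. With F_λ(U,W) = Uᵀ(A² − λ²I_n)⁻¹W, for every real λ with A² − λ²I_n invertible the 4r×4r block matrices 𝓛(λ) = [[λF_λ(P,X), λF_λ(P,P), F_λ(AP,Y), −I_r + F_λ(AP,Q)],[−λF_λ(X,X), −λF_λ(X,P), −F_λ(AX,Y), −F_λ(AX,Q)],[F_λ(AQ,X), −I_r + F_λ(AQ,P), λF_λ(Q,Y), λF_λ(Q,Q)],[−F_λ(AY,X), −F_λ(AY,P), −λF_λ(Y,Y), −λF_λ(Y,Q)]] and 𝓐(λ) = [[XᵀP, Λ, 0, −λI_r],[I_r, XᵀP, 0,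 0],[0, −λI_r, YᵀQ, Π],[0, 0, I_r, YᵀQ]] satisfy the dual Lax equation d/dt 𝓛(λ) = [𝓛(λ), 𝓐(λ)]. -/

import Mathlib

open Matrix

/-- Entrywise derivative of a matrix-valued curve. -/
def HDM {m k : Type} (M : ℝ → Matrix m k ℝ) (M' : Matrix m k ℝ) (t : ℝ) : Prop :=
  ∀ i j, HasDerivAt (fun s => M s i j) (M' i j) t

theorem HDM.neg {m k : Type} {M : ℝ → Matrix m k ℝ} {M' : Matrix m k ℝ} {t : ℝ}
    (h : HDM M M' t) : HDM (fun s => -M s) (-M') t := fun i j => (h i j).neg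

theorem HDM.smul {m k : Type} {M : ℝ → Matrix m k ℝ} {M' : Matrix m k ℝ} {t : ℝ} (c : ℝ)
    (h : HDM M M' t) : HDM (fun s => c • M s) (c • M') t := fun i j => (h i j).const_mul c

theorem HDM.cadd {m k : Type} {M : ℝ → Matrix m k ℝ} {M' : Matrix m k ℝ} {t : ℝ}
    (C : Matrix m k ℝ) (h : HDM M M' t) : HDM (fun s => C + M s) M' t :=
  fun i j => (h i j).const_add (C i j)

theorem HDM.transpose {m k : Type} {M : ℝ → Matrix m k ℝ} {M' : Matrix m k ℝ} {t : ℝ}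
    (h : HDM M M' t) : HDM (fun s => (M s)ᵀ) M'ᵀ t := fun i j => h j i

theorem HDM.mul {m k l : Type} [Fintype k] {M : ℝ → Matrix m k ℝ} {M' : Matrix m k ℝ}
    {N : ℝ → Matrix k l ℝ} {N' : Matrix k l ℝ} {t : ℝ}
    (h : HDM M M' t) (g : HDM N N' t) :
    HDM (fun s => M s * N s) (M' * N t + M t * N') t := by
  intro i j
  simp only [Matrix.mul_apply, Matrix.add_apply, ← Finset.sum_add_distrib]
  exact HasDerivAt.fun_sum fun x _ => (h i x).mul (g x j)

theorem HDM.const {m k : Type} (C : Matrix m k ℝ) (t : ℝ) : HDM (fun _ => C) 0 t :=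
  fun i j => hasDerivAt_const t (C i j)

theorem HDM.cmul {m k l : Type} [Fintype k] {M : ℝ → Matrix k l ℝ} {M' : Matrix k l ℝ}
    {t : ℝ} (C : Matrix m k ℝ) (h : HDM M M' t) : HDM (fun s => C * M s) (C * M') t := by
  have := (HDM.const C t).mul h
  simpa using this

theorem HDM.blocks {m k l o : Type} {M : ℝ → Matrix m k ℝ} {N : ℝ → Matrix m l ℝ}
    {R : ℝ → Matrix o k ℝ} {S : ℝ → Matrix o l ℝ} {M' N' R' S'} {t : ℝ}
    (h1 : HDM M M' t) (h2 : HDM N N' t) (h3 : HDM R R' t) (h4 : HDM S S' t) :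
    HDM (fun s => Matrix.fromBlocks (M s) (N s) (R s) (S s))
      (Matrix.fromBlocks M' N' R' S') t := by
  rintro (i | i) (j | j)
  · exact h1 i j
  · exact h2 i j
  · exact h3 i j
  · exact h4 i j

theorem HDM.congr {m k : Type} {M : ℝ → Matrix m k ℝ} {M' N' : Matrix m k ℝ} {t : ℝ}
    (h : HDM M M' t) (e : M' = N') : HDM M N' t := e ▸ h

/-- The r-coupled Neumann system with the normal metric implies the dual
4r×4r Lax equation d/dt 𝓛(λ) = [𝓛(λ), 𝓐(λ)], with F_λ(U,W) = Uᵀ(A² − λ²I)⁻¹W. -/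
theorem coupled_neumann_dual_lax {n r : ℕ} (a : Fin n → ℝ)
    (A : Matrix (Fin n) (Fin n) ℝ) (hA : A = Matrix.diagonal a)
    (X P Y Q : ℝ → Matrix (Fin n) (Fin r) ℝ)
    (hcX : ∀ t, (X t)ᵀ * X t = 1) (hcY : ∀ t, (Y t)ᵀ * Y t = 1)
    (hcXP : ∀ t, (X t)ᵀ * P t + (P t)ᵀ * X t = 0)
    (hcYQ : ∀ t, (Y t)ᵀ * Q t + (Q t)ᵀ * Y t = 0)
    (Lam Pim : ℝ → Matrix (Fin r) (Fin r) ℝ)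
    (hLam : ∀ t, Lam t =
      (1 / 2 : ℝ) • ((X t)ᵀ * A * Y t + (Y t)ᵀ * A * X t) - (P t)ᵀ * P t)
    (hPim : ∀ t, Pim t =
      (1 / 2 : ℝ) • ((X t)ᵀ * A * Y t + (Y t)ᵀ * A * X t) - (Q t)ᵀ * Q t)
    (hX : ∀ t i j, HasDerivAt (fun s => X s i j)
      ((P t - X t * (P t)ᵀ * X t) i j) t)
    (hP : ∀ t i j, HasDerivAt (fun s => P s i j)
      ((-(A * Y t) + P t * (X t)ᵀ * P t + X t * Lam t) i j) t)
    (hY : ∀ t i j, HasDerivAt (fun s => Y s i j)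
      ((Q t - Y t * (Q t)ᵀ * Y t) i j) t)
    (hQ : ∀ t i j, HasDerivAt (fun s => Q s i j)
      ((-(A * X t) + Q t * (Y t)ᵀ * Q t + Y t * Pim t) i j) t)
    (lam : ℝ)
    (hinv : IsUnit (A ^ 2 - lam ^ 2 • (1 : Matrix (Fin n) (Fin n) ℝ)))
    (Fl : Matrix (Fin n) (Fin r) ℝ → Matrix (Fin n) (Fin r) ℝ → Matrix (Fin r) (Fin r) ℝ)
    (hFl : ∀ U W, Fl U W = Uᵀ * (A ^ 2 - lam ^ 2 • 1)⁻¹ * W)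
    (𝓛 𝓐 : ℝ → Matrix ((Fin r ⊕ Fin r) ⊕ (Fin r ⊕ Fin r))
      ((Fin r ⊕ Fin r) ⊕ (Fin r ⊕ Fin r)) ℝ)
    (h𝓛 : ∀ t, 𝓛 t = Matrix.fromBlocks
      (Matrix.fromBlocks
        (lam • Fl (P t) (X t)) (lam • Fl (P t) (P t))
        (-(lam • Fl (X t) (X t))) (-(lam • Fl (X t) (P t))))
      (Matrix.fromBlocks
        (Fl (A * P t) (Y t)) (-1 + Fl (A * P t) (Q t))
        (-(Fl (A * X t) (Y t))) (-(Fl (A * X t) (Q t))))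
      (Matrix.fromBlocks
        (Fl (A * Q t) (X t)) (-1 + Fl (A * Q t) (P t))
        (-(Fl (A * Y t) (X t))) (-(Fl (A * Y t) (P t))))
      (Matrix.fromBlocks
        (lam • Fl (Q t) (Y t)) (lam • Fl (Q t) (Q t))
        (-(lam • Fl (Y t) (Y t))) (-(lam • Fl (Y t) (Q t)))))
    (h𝓐 : ∀ t, 𝓐 t = Matrix.fromBlocks
      (Matrix.fromBlocks ((X t)ᵀ * P t) (Lam t) 1 ((X t)ᵀ * P t))
      (Matrix.fromBlocks 0 (-(lam • 1)) 0 0)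
      (Matrix.fromBlocks 0 (-(lam • 1)) 0 0)
      (Matrix.fromBlocks ((Y t)ᵀ * Q t) (Pim t) 1 ((Y t)ᵀ * Q t))) :
    ∀ t i j, HasDerivAt (fun s => 𝓛 s i j) ((𝓛 t * 𝓐 t - 𝓐 t * 𝓛 t) i j) t := by
  intro t
  obtain ⟨B, hB⟩ : ∃ B, B = (A ^ 2 - lam ^ 2 • (1 : Matrix (Fin n) (Fin n) ℝ))⁻¹ := ⟨_, rfl⟩
  have hAt : Aᵀ = A := by rw [hA, Matrix.diagonal_transpose]
  have hdet := (Matrix.isUnit_iff_isUnit_det _).1 hinv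
  have hB1 : (A ^ 2 - lam ^ 2 • (1 : Matrix (Fin n) (Fin n) ℝ)) * B = 1 := by
    rw [hB]; exact Matrix.mul_nonsing_inv _ hdet
  have hB2 : B * (A ^ 2 - lam ^ 2 • (1 : Matrix (Fin n) (Fin n) ℝ)) = 1 := by
    rw [hB]; exact Matrix.nonsing_inv_mul _ hdet
  have hAAB : A * (A * B) = 1 + lam ^ 2 • B := by
    rw [← hB1, Matrix.sub_mul, pow_two A, Matrix.mul_assoc, Matrix.smul_mul, Matrix.one_mul]
    abel
  have hcomm : A * B = B * A := by
    have hc : (A ^ 2 - lam ^ 2 • (1 : Matrix (Fin n) (Fin n) ℝ)) * A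
        = A * (A ^ 2 - lam ^ 2 • (1 : Matrix (Fin n) (Fin n) ℝ)) := by
      simp only [Matrix.sub_mul, Matrix.mul_sub, Matrix.smul_mul, Matrix.mul_smul,
        Matrix.one_mul, Matrix.mul_one, pow_two A, Matrix.mul_assoc]
    calc A * B = (B * (A ^ 2 - lam ^ 2 • (1 : Matrix (Fin n) (Fin n) ℝ))) * (A * B) := by
          rw [hB2, Matrix.one_mul]
      _ = B * ((A ^ 2 - lam ^ 2 • (1 : Matrix (Fin n) (Fin n) ℝ)) * A) * B := by
          simp only [Matrix.mul_assoc]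
      _ = B * A * ((A ^ 2 - lam ^ 2 • (1 : Matrix (Fin n) (Fin n) ℝ)) * B) := by
          rw [hc]; simp only [Matrix.mul_assoc]
      _ = B * A := by rw [hB1, Matrix.mul_one]
  have hF : ∀ U W, Fl U W = Uᵀ * B * W := by intro U W; rw [hFl, hB]
  have addL : ∀ U V W, Fl (U + V) W = Fl U W + Fl V W := by
    intro U V W; simp only [hF, Matrix.transpose_add, Matrix.add_mul]
  have addR : ∀ U V W, Fl U (V + W) = Fl U V + Fl U W := by
    intro U V W; simp only [hF, Matrix.mul_add]
  have negL : ∀ U W, Fl (-U) W = -Fl U W := by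
    intro U W; simp only [hF, Matrix.transpose_neg, Matrix.neg_mul]
  have negR : ∀ U W, Fl U (-W) = -Fl U W := by
    intro U W; simp only [hF, Matrix.mul_neg]
  have mulL : ∀ U (S : Matrix (Fin r) (Fin r) ℝ) W, Fl (U * S) W = Sᵀ * Fl U W := by
    intro U S W; simp only [hF, Matrix.transpose_mul, Matrix.mul_assoc]
  have mulR : ∀ U (S : Matrix (Fin r) (Fin r) ℝ) W, Fl U (W * S) = Fl U W * S := by
    intro U S W; simp only [hF, Matrix.mul_assoc]
  have FA : ∀ U W, Fl U (A * W) = Fl (A * U) W := by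
    intro U W
    simp only [hF, Matrix.transpose_mul, hAt]
    rw [Matrix.mul_assoc Uᵀ A B, hcomm]
    simp only [Matrix.mul_assoc]
  have FAA : ∀ U W, Fl (A * (A * U)) W = Uᵀ * W + lam ^ 2 • Fl U W := by
    intro U W
    simp only [hF, Matrix.transpose_mul, hAt]
    rw [Matrix.mul_assoc (Uᵀ * A) A B, Matrix.mul_assoc Uᵀ A, hAAB]
    simp only [Matrix.mul_add, Matrix.add_mul, Matrix.mul_one, Matrix.mul_smul, Matrix.smul_mul]
  have HF : ∀ {U W : ℝ → Matrix (Fin n) (Fin r) ℝ} {U' W'}, HDM U U' t → HDM W W' t →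
      HDM (fun s => Fl (U s) (W s)) (Fl U' (W t) + Fl (U t) W') t := by
    intro U W U' W' h g
    simp only [hF]
    exact (((h.transpose).mul (HDM.const B t)).mul g).congr (by simp)
  obtain ⟨S, hS⟩ : ∃ S, S = (X t)ᵀ * P t := ⟨_, rfl⟩
  obtain ⟨T, hT⟩ : ∃ T, T = (Y t)ᵀ * Q t := ⟨_, rfl⟩
  have hS' : (P t)ᵀ * X t = -S := by
    rw [hS]; exact eq_neg_of_add_eq_zero_right (hcXP t)
  have hT' : (Q t)ᵀ * Y t = -T := by
    rw [hT]; exact eq_neg_of_add_eq_zero_right (hcYQ t)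
  have hSt : Sᵀ = -S := by rw [← hS', hS, Matrix.transpose_mul, Matrix.transpose_transpose]
  have hTt : Tᵀ = -T := by rw [← hT', hT, Matrix.transpose_mul, Matrix.transpose_transpose]
  have hLt : (Lam t)ᵀ = Lam t := by
    rw [hLam]
    simp only [Matrix.transpose_sub, Matrix.transpose_smul, Matrix.transpose_add,
      Matrix.transpose_mul, Matrix.transpose_transpose, hAt, Matrix.mul_assoc]
    rw [add_comm]
  have hPt : (Pim t)ᵀ = Pim t := by
    rw [hPim]
    simp only [Matrix.transpose_sub, Matrix.transpose_smul, Matrix.transpose_add,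
      Matrix.transpose_mul, Matrix.transpose_transpose, hAt, Matrix.mul_assoc]
    rw [add_comm]
  have dX : HDM X (P t + X t * S) t := HDM.congr (hX t) (by
    rw [Matrix.mul_assoc, hS', Matrix.mul_neg, sub_neg_eq_add])
  have dY : HDM Y (Q t + Y t * T) t := HDM.congr (hY t) (by
    rw [Matrix.mul_assoc, hT', Matrix.mul_neg, sub_neg_eq_add])
  have dP : HDM P (-(A * Y t) + P t * S + X t * Lam t) t := HDM.congr (hP t) (by
    rw [Matrix.mul_assoc, ← hS])
  have dQ : HDM Q (-(A * X t) + Q t * T + Y t * Pim t) t := HDM.congr (hQ t) (by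
    rw [Matrix.mul_assoc, ← hT])
  have key := HDM.blocks
    (HDM.blocks ((HF dP dX).smul lam) ((HF dP dP).smul lam)
      ((HF dX dX).smul lam).neg ((HF dX dP).smul lam).neg)
    (HDM.blocks (HF (dP.cmul A) dY) ((HF (dP.cmul A) dQ).cadd (-1))
      (HF (dX.cmul A) dY).neg (HF (dX.cmul A) dQ).neg)
    (HDM.blocks (HF (dQ.cmul A) dX) ((HF (dQ.cmul A) dP).cadd (-1))
      (HF (dY.cmul A) dX).neg (HF (dY.cmul A) dP).neg)
    (HDM.blocks ((HF dQ dY).smul lam) ((HF dQ dQ).smul lam)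
      ((HF dY dY).smul lam).neg ((HF dY dQ).smul lam).neg)
  have h𝓛' : 𝓛 = _ := funext h𝓛
  rw [← h𝓛'] at key
  refine key.congr ?_
  rw [h𝓛, h𝓐, ← hS, ← hT]
  simp only [Matrix.fromBlocks_multiply, Matrix.fromBlocks_add, sub_eq_add_neg,
    Matrix.fromBlocks_neg]
  simp only [Matrix.mul_add A, Matrix.mul_neg A, addL, addR, negL, negR]
  have mulLA : ∀ (U : Matrix (Fin n) (Fin r) ℝ) (S : Matrix (Fin r) (Fin r) ℝ) W,
      Fl (A * (U * S)) W = Sᵀ * Fl (A * U) W := by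
    intro U S W; rw [← Matrix.mul_assoc, mulL]
  simp only [mulLA, mulL, mulR, FA, FAA, hSt, hTt, hLt, hPt, hcX, hcY, hS', hT', ← hS, ← hT]
  congr 2 <;>
  · simp only [Matrix.mul_add, Matrix.add_mul, Matrix.mul_neg, Matrix.neg_mul, Matrix.mul_smul,
      Matrix.smul_mul, Matrix.mul_one, Matrix.one_mul, Matrix.mul_zero, Matrix.zero_mul]
    module
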